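/- If X is a quantum-Wajsberg algebra, then the relation ≤_Q is a partial order on X (i.e., ≤_Q is reflexive, antisymmetric, and transitive). -/

import Mathlib

/-!
Put `a ⊙ b = (a → b*)*`. In an involutive BE algebra `⊙` is commutative and associative, it is
residuated in the sense that `(a ⊙ b) → c = a → (b → c)`, and `x ∧ y = y ⊙ (y → x)`. Hence
`x ≤_Q y` says `x = y ⊙ (y → x)`, and it implies `x ≤ y`, i.e. `x → y = 1`. Antisymmetry is then
immediate: `y = x ⊙ (x → y) = x ⊙ 1 = x`.

For transitivity let `x ≤_Q y ≤_Q z`. Residuation gives `x ≤ z`, so `z ∧ x = x`, and the axiom (QW)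
turns `(z → x) ∧ (z → y) = z → ((z ∧ x) ∧ (y ∧ z)) = z → (x ∧ y)` into `z → x ≤_Q z → y`. Therefore
`z ⊙ (z → x) = z ⊙ (z → y) ⊙ ((z → y) → (z → x)) = y ⊙ (y → x) = x`, because
`(z → y) → (z → x) = (z ⊙ (z → y)) → x = y → x`.
-/

/-- A bounded involutive BE algebra. -/
class InvBE (X : Type*) where
  imp : X → X → X
  one : X
  zero : X
  be1 : ∀ x : X, imp x x = one
  be2 : ∀ x : X, imp x one = one
  be3 : ∀ x : X, imp one x = x
  be4 : ∀ x y z : X, imp x (imp y z) = imp y (imp x z)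
  bound : ∀ x : X, imp zero x = one
  dn : ∀ x : X, imp (imp x zero) zero = x

namespace InvBE

variable {X : Type*} [InvBE X]

/-- Negation: `x* = x → 0`. -/
def neg (x : X) : X := imp x zero

/-- `x ∨ y = (x → y) → y`. -/
def sup (x y : X) : X := imp (imp x y) y

/-- `x ∧ y = ((x* → y*) → y*)*`. -/
def inf (x y : X) : X := neg (imp (imp (neg x) (neg y)) (neg y))

/-- `x ≤ y` iff `x → y = 1`. -/
def le (x y : X) : Prop := imp x y = one

/-- `x ≤_Q y` iff `x = x ∧ y`. -/
def leQ (x y : X) : Prop := x = inf x y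

end InvBE

namespace InvBE

variable {X : Type*} [InvBE X]

/-- The product `x ⊙ y = (x → y*)*`. -/
def prod (x y : X) : X := neg (imp x (neg y))

theorem neg_neg' (x : X) : neg (neg x) = x := dn x

theorem imp_neg_comm (x y : X) : imp x (neg y) = imp y (neg x) := be4 x y zero

theorem neg_imp_neg (x y : X) : imp (neg x) (neg y) = imp y x := by
  rw [imp_neg_comm, neg_neg']

theorem prod_comm (x y : X) : prod x y = prod y x := by
  unfold prod; rw [imp_neg_comm]

theorem prod_imp (x y z : X) : imp (prod x y) z = imp x (imp y z) := by
  unfold prod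
  rw [← neg_neg' z, neg_imp_neg, be4, ← imp_neg_comm y (neg z), neg_neg']

theorem prod_assoc (x y z : X) : prod (prod x y) z = prod x (prod y z) := by
  have h : imp (prod x y) (neg z) = imp x (neg (prod y z)) := by
    rw [prod_imp]; unfold prod; rw [neg_neg']
  unfold prod at h ⊢
  rw [h]

theorem prod_one (x : X) : prod x one = x := by
  rw [prod_comm]; unfold prod; rw [be3, neg_neg']

theorem inf_eq_prod (x y : X) : inf x y = prod y (imp y x) := by
  rw [prod_comm]; unfold inf prod; rw [neg_imp_neg]

theorem inf_eq_right {x y : X} (h : imp y x = one) : inf x y = y := by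
  rw [inf_eq_prod, h, prod_one]

theorem leQ.imp_imp_eq_one {x y z : X} (h : leQ x y) (hz : imp y z = one) : imp x z = one := by
  have h' : x = prod y (imp y x) := h.trans (inf_eq_prod x y)
  rw [h', prod_comm, prod_imp, hz, be2]

end InvBE

open InvBE in
theorem stmt_8 {X : Type*} [InvBE X]
    (qw : ∀ x y z : X, imp x (inf (inf x y) (inf z x)) = inf (imp x y) (imp x z)) :
    (∀ x : X, leQ x x) ∧
    (∀ x y : X, leQ x y → leQ y x → x = y) ∧
    (∀ x y z : X, leQ x y → leQ y z → leQ x z) := by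
  refine ⟨fun x => (inf_eq_right (be1 x)).symm, fun x y hxy hyx => ?_, fun x y z hxy hyz => ?_⟩
  · exact (hyx.trans (inf_eq_right (hxy.imp_imp_eq_one (be1 y)))).symm
  · have hxz : imp x z = one := hxy.imp_imp_eq_one (hyz.imp_imp_eq_one (be1 z))
    have hy : prod z (imp z y) = y := (hyz.trans (inf_eq_prod y z)).symm
    have hmono : imp z x = inf (imp z x) (imp z y) := by
      rw [← qw, inf_eq_right hxz, ← (show y = inf y z from hyz), ← (show x = inf x y from hxy)]
    have hres : imp (imp z y) (imp z x) = imp y x := by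
      rw [← prod_imp, prod_comm, hy]
    have hx : prod z (imp z x) = x := by
      rw [hmono, inf_eq_prod, ← prod_assoc, hy, hres, ← inf_eq_prod]
      exact hxy.symm
    exact hx.symm.trans (inf_eq_prod x z).symm
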